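/- The number of transfer systems on the grid poset {0,1,2,3} × {0,1} (the divisor lattice of p³q) is exactly 544. -/

import Mathlib

/-- A transfer system on the grid poset `{0,...,m} × {0,...,n}` (the product of
two chains, with componentwise order and componentwise meet): a relation
contained in the partial order, reflexive, transitive, and satisfying
restriction with respect to the meet. -/
def IsTransferSystemGrid (m n : ℕ) (R : ℕ × ℕ → ℕ × ℕ → Prop) : Prop :=
  (∀ a b, R a b → a.1 ≤ b.1 ∧ a.2 ≤ b.2 ∧ b.1 ≤ m ∧ b.2 ≤ n) ∧
  (∀ a : ℕ × ℕ, a.1 ≤ m → a.2 ≤ n → R a a) ∧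
  (∀ a b c, R a b → R b c → R a c) ∧
  (∀ k h p : ℕ × ℕ, R k h → p.1 ≤ h.1 → p.2 ≤ h.2 →
    R (min k.1 p.1, min k.2 p.2) p)

namespace GridTS

/-- The strict pairs of the grid, encoded as `8 * a + b` where the point `(x, y)` is `2 * x + y`,
each with the Horn clauses (two premises, one conclusion) on it and the pairs below it. -/
def tab : List (ℕ × List (ℕ × ℕ × ℕ)) := [
  (1, [(1, 11, 3), (1, 13, 5), (1, 15, 7), (3, 3, 1), (5, 5, 1), (7, 7, 1), (19, 19, 1), (21, 21, 1), (23, 23, 1), (37, 37, 1), (39, 39, 1), (55, 55, 1)]),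
  (2, [(2, 19, 3), (2, 20, 4), (2, 21, 5), (2, 22, 6), (2, 23, 7), (3, 3, 2), (4, 4, 2), (5, 5, 2), (6, 6, 2), (7, 7, 2), (11, 11, 2), (13, 13, 2), (15, 15, 2)]),
  (3, [(3, 29, 5), (3, 31, 7), (5, 5, 3), (7, 7, 3)]),
  (4, [(4, 37, 5), (4, 38, 6), (4, 39, 7), (5, 5, 4), (6, 6, 4), (7, 7, 4), (13, 13, 4), (15, 15, 4)]),
  (5, [(5, 47, 7), (7, 7, 5)]),
  (6, [(6, 55, 7), (7, 7, 6), (15, 15, 6)]),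
  (7, []),
  (11, [(11, 29, 13), (11, 31, 15), (13, 13, 11), (15, 15, 11)]),
  (13, [(13, 47, 15), (15, 15, 13)]),
  (15, []),
  (19, [(19, 29, 21), (19, 31, 23), (21, 21, 19), (23, 23, 19), (37, 37, 19), (39, 39, 19), (55, 55, 19)]),
  (20, [(20, 37, 21), (20, 38, 22), (20, 39, 23), (21, 21, 20), (22, 22, 20), (23, 23, 20), (29, 29, 20), (31, 31, 20)]),
  (21, [(21, 47, 23), (23, 23, 21)]),
  (22, [(22, 55, 23), (23, 23, 22), (31, 31, 22)]),
  (23, []),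
  (29, [(29, 47, 31), (31, 31, 29)]),
  (31, []),
  (37, [(37, 47, 39), (39, 39, 37), (55, 55, 37)]),
  (38, [(38, 55, 39), (39, 39, 38), (47, 47, 38)]),
  (39, []),
  (47, []),
  (55, [])]

/-- The diagonal bits. -/
def base : ℕ := 9241421688590303745

def sat (m : ℕ) (c : ℕ × ℕ × ℕ) : Bool :=
  !(m.testBit c.1 && m.testBit c.2.1) || m.testBit c.2.2

/-- `force f n = f n`, but evaluation reduces `n` to a numeral first. -/
def force {α : Type} (f : ℕ → α) (n : ℕ) : α := Nat.rec (f 0) (fun k _ => f (k + 1)) n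

theorem force_eq {α : Type} (f : ℕ → α) (n : ℕ) : force f n = f n := by
  cases n <;> rfl

/-- `Nat.testBit` in terms of the basic operations on numerals. -/
def tb (m q : ℕ) : Bool := Nat.beq (Nat.land (Nat.shiftRight m q) 1) 1

theorem tb_eq (m q : ℕ) : tb m q = m.testBit q := by
  have h : Nat.land (Nat.shiftRight m q) 1 = (m >>> q) % 2 := Nat.and_one_is_mod _
  unfold tb
  rw [h, Nat.testBit, Nat.one_and_eq_mod_two]
  rcases Nat.mod_two_eq_zero_or_one (m >>> q) with e | e <;> rw [e] <;> rfl

def fastSat (m : ℕ) (c : ℕ × ℕ × ℕ) : Bool :=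
  bif tb m c.1 then (bif tb m c.2.1 then tb m c.2.2 else true) else true

theorem fastSat_eq (m : ℕ) (c : ℕ × ℕ × ℕ) : fastSat m c = sat m c := by
  simp only [fastSat, sat, tb_eq]
  cases m.testBit c.1 <;> cases m.testBit c.2.1 <;> simp

def enum : List (ℕ × List (ℕ × ℕ × ℕ)) → List ℕ
  | [] => [base]
  | (p, cs) :: l =>
    ((enum l).flatMap (fun m => force (fun k => [m, k]) (m ||| 1 <<< p))).filter (fun m => cs.all (fastSat m))

open Classical in
noncomputable def code (r : ℕ → Prop) : List (ℕ × List (ℕ × ℕ × ℕ)) → ℕ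
  | [] => base
  | (p, _) :: l => if r p then code r l ||| 1 <<< p else code r l

theorem testBit_code (r : ℕ → Prop) (l : List (ℕ × List (ℕ × ℕ × ℕ))) (q : ℕ) :
    (code r l).testBit q = true ↔ (base.testBit q = true ∨ (q ∈ l.map Prod.fst ∧ r q)) := by
  induction l with
  | nil => simp [code]
  | cons x l ih =>
    obtain ⟨p, cs⟩ := x
    have h1 : (1 <<< p).testBit q = true ↔ q = p := by
      rw [Nat.one_shiftLeft, Nat.testBit_two_pow]
      simp [eq_comm]
    unfold code
    split_ifs with h
    · rw [Nat.testBit_or, Bool.or_eq_true, ih, h1]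
      simp only [List.map_cons, List.mem_cons]
      constructor
      · rintro ((h | h) | rfl) <;> tauto
      · tauto
    · rw [ih]
      simp only [List.map_cons, List.mem_cons]
      constructor
      · tauto
      · rintro (h' | ⟨rfl | h', h''⟩) <;> tauto

/-- Clauses only mention pairs processed so far. -/
def wf : List (ℕ × List (ℕ × ℕ × ℕ)) → Bool
  | [] => true
  | (p, cs) :: l => wf l && cs.all (fun c =>
      [c.1, c.2.1, c.2.2].all (fun q => !base.testBit q && (p :: l.map Prod.fst).contains q))

theorem code_mem (r : ℕ → Prop) (l : List (ℕ × List (ℕ × ℕ × ℕ))) (hw : wf l = true)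
    (hr : ∀ x ∈ l, ∀ c ∈ x.2, r c.1 → r c.2.1 → r c.2.2) : code r l ∈ enum l := by
  induction l with
  | nil => simp [code, enum]
  | cons x l ih =>
    obtain ⟨p, cs⟩ := x
    simp only [wf, Bool.and_eq_true, List.all_eq_true] at hw
    have ih' := ih hw.1 (fun x hx => hr x (List.mem_cons_of_mem _ hx))
    rw [enum, List.mem_filter]
    constructor
    · rw [List.mem_flatMap]
      refine ⟨_, ih', ?_⟩
      rw [code, force_eq]
      split_ifs <;> simp
    · rw [List.all_eq_true]
      intro c hc
      have key : ∀ q ∈ [c.1, c.2.1, c.2.2],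
          ((code r ((p, cs) :: l)).testBit q = true ↔ r q) := by
        intro q hq
        have h := hw.2 c hc q hq
        simp only [Bool.not_eq_true', List.contains_iff_mem] at h
        rw [testBit_code, List.map_cons]
        simp only [h.1, h.2, true_and, Bool.false_eq_true, false_or]
      have h1 := key c.1 (by simp)
      have h2 := key c.2.1 (by simp)
      have h3 := key c.2.2 (by simp)
      have h := hr _ List.mem_cons_self c hc
      rw [← h1, ← h2, ← h3] at h
      rw [fastSat_eq]
      unfold sat
      revert h
      generalize (code r ((p, cs) :: l)).testBit c.1 = u
      generalize (code r ((p, cs) :: l)).testBit c.2.1 = v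
      generalize (code r ((p, cs) :: l)).testBit c.2.2 = w
      revert u v w
      decide

def sols : List ℕ := enum tab

/-- All admissible bits. -/
def full : ℕ := tab.foldr (fun x m => m ||| 1 <<< x.1) base

theorem wf_tab : wf tab = true := by decide +kernel
theorem sols_length : sols.length = 544 := by decide +kernel
theorem sols_chain : sols.IsChain (· < ·) := by decide +kernel
theorem sols_check : sols.all (fun m => tab.all (fun x => x.2.all (fastSat m)) &&
    (Nat.beq (Nat.land m full) m && Nat.beq (Nat.land m base) base)) = true := by decide +kernel

theorem sols_sat : ∀ m ∈ sols, ∀ x ∈ tab, ∀ c ∈ x.2, sat m c = true := by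
  intro m hm x hx c hc
  have h := List.all_eq_true.1 sols_check m hm
  rw [Bool.and_eq_true] at h
  rw [← fastSat_eq]
  exact List.all_eq_true.1 (List.all_eq_true.1 h.1 x hx) c hc

theorem sols_full : ∀ m ∈ sols, m &&& full = m := by
  intro m hm
  have h := List.all_eq_true.1 sols_check m hm
  rw [Bool.and_eq_true, Bool.and_eq_true] at h
  exact Nat.eq_of_beq_eq_true h.2.1

theorem sols_base : ∀ m ∈ sols, m &&& base = base := by
  intro m hm
  have h := List.all_eq_true.1 sols_check m hm
  rw [Bool.and_eq_true, Bool.and_eq_true] at h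
  exact Nat.eq_of_beq_eq_true h.2.2

theorem sols_nodup : sols.Nodup :=
  (List.isChain_iff_pairwise.1 sols_chain).imp (fun h => ne_of_lt h)

def idx (a : ℕ × ℕ) : ℕ := 2 * a.1 + a.2
def pt (i : ℕ) : ℕ × ℕ := (i / 2, i % 2)

theorem pt_idx (a : ℕ × ℕ) (h : a.2 ≤ 1) : pt (idx a) = a := by
  ext <;> simp only [pt, idx] <;> omega

theorem idx_lt (a : ℕ × ℕ) (h1 : a.1 ≤ 3) (h : a.2 ≤ 1) : idx a < 8 := by
  simp only [idx]; omega

theorem pt_le (i : ℕ) (h : i < 8) : (pt i).1 ≤ 3 ∧ (pt i).2 ≤ 1 := by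
  simp only [pt]; omega

theorem idx_pt (i : ℕ) : idx (pt i) = i := by
  simp only [pt, idx]; omega

def meet (i j : ℕ) : ℕ := 2 * min (i / 2) (j / 2) + min (i % 2) (j % 2)

theorem clauses_valid : ∀ x ∈ tab, ∀ c ∈ x.2,
    (c.1 % 8 = c.2.1 / 8 ∧ c.2.2 / 8 = c.1 / 8 ∧ c.2.2 % 8 = c.2.1 % 8) ∨
    ((c.2.2 % 8) / 2 ≤ (c.1 % 8) / 2 ∧ (c.2.2 % 8) % 2 ≤ (c.1 % 8) % 2 ∧
      c.2.2 / 8 = meet (c.1 / 8) (c.2.2 % 8)) := by decide +kernel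

theorem full_le : ∀ a < 8, ∀ b < 8, full.testBit (8 * a + b) = true →
    a / 2 ≤ b / 2 ∧ a % 2 ≤ b % 2 := by decide +kernel

set_option synthInstance.maxHeartbeats 4000000 in
set_option synthInstance.maxSize 20000 in
theorem le_full : ∀ a < 8, ∀ b < 8, a / 2 ≤ b / 2 → a % 2 ≤ b % 2 →
    a = b ∨ 8 * a + b ∈ tab.map Prod.fst := by decide +kernel

theorem full_mem : ∀ q < 64, full.testBit q = true →
    base.testBit q = true ∨ q ∈ tab.map Prod.fst := by decide +kernel

theorem keys_lt : ∀ q ∈ tab.map Prod.fst, q < 64 := by decide +kernel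

theorem base_diag : ∀ q < 64, base.testBit q = true ↔ q / 8 = q % 8 := by decide +kernel

theorem base_lt : ∀ q, base.testBit q = true → q < 64 := by
  intro q h
  by_contra hq
  rw [Nat.testBit_eq_false_of_lt] at h
  · simp at h
  · calc base < 2 ^ 64 := by decide +kernel
      _ ≤ 2 ^ q := Nat.pow_le_pow_right (by norm_num) (by omega)

theorem full_lt : ∀ q, full.testBit q = true → q < 64 := by
  intro q h
  by_contra hq
  rw [Nat.testBit_eq_false_of_lt] at h
  · simp at h
  · calc full < 2 ^ 64 := by decide +kernel
      _ ≤ 2 ^ q := Nat.pow_le_pow_right (by norm_num) (by omega)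

set_option synthInstance.maxHeartbeats 4000000 in
set_option synthInstance.maxSize 20000 in
theorem trans_complete : ∀ a < 8, ∀ b < 8, full.testBit (8 * a + b) = true →
    ∀ c < 8, full.testBit (8 * b + c) = true → a = b ∨ b = c ∨
      ∃ x ∈ tab, (8 * a + b, 8 * b + c, 8 * a + c) ∈ x.2 := by decide +kernel

set_option synthInstance.maxHeartbeats 4000000 in
set_option synthInstance.maxSize 20000 in
theorem res_complete : ∀ k < 8, ∀ h < 8, full.testBit (8 * k + h) = true →
    ∀ p < 8, (p / 2 ≤ h / 2 ∧ p % 2 ≤ h % 2) →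
      meet k p = p ∨ (meet k p = k ∧ p = h) ∨
      ∃ x ∈ tab, (8 * k + h, 8 * k + h, 8 * meet k p + p) ∈ x.2 := by decide +kernel

/-- The relation on codes. -/
def rel (R : ℕ × ℕ → ℕ × ℕ → Prop) (q : ℕ) : Prop := R (pt (q / 8)) (pt (q % 8))

theorem rel_clauses (R : ℕ × ℕ → ℕ × ℕ → Prop) (hR : IsTransferSystemGrid 3 1 R) :
    ∀ x ∈ tab, ∀ c ∈ x.2, rel R c.1 → rel R c.2.1 → rel R c.2.2 := by
  obtain ⟨h1, h2, h3, h4⟩ := hR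
  intro x hx c hc ha hb
  rcases clauses_valid x hx c hc with ⟨e1, e2, e3⟩ | ⟨e1, e2, e3⟩
  · unfold rel at *
    rw [e2, e3]
    rw [← e1] at hb
    exact h3 _ _ _ ha hb
  · unfold rel at *
    have := h4 _ _ (pt (c.2.2 % 8)) ha e1 e2
    convert this using 1
    rw [e3]
    ext <;> simp only [pt, meet] <;> omega

theorem testBit_rel (R : ℕ × ℕ → ℕ × ℕ → Prop) (hR : IsTransferSystemGrid 3 1 R)
    (a b : ℕ × ℕ) :
    R a b ↔ (a.1 ≤ 3 ∧ a.2 ≤ 1 ∧ b.1 ≤ 3 ∧ b.2 ≤ 1) ∧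
      (code (rel R) tab).testBit (8 * idx a + idx b) = true := by
  obtain ⟨h1, h2, h3, h4⟩ := hR
  rw [testBit_code]
  have hrel : a.2 ≤ 1 → b.1 ≤ 3 → b.2 ≤ 1 → (rel R (8 * idx a + idx b) ↔ R a b) := by
    intro ha hb1 hb2
    have hb := idx_lt b hb1 hb2
    unfold rel
    rw [show (8 * idx a + idx b) / 8 = idx a by omega,
      show (8 * idx a + idx b) % 8 = idx b by omega, pt_idx a ha, pt_idx b hb2]
  constructor
  · intro h
    obtain ⟨e1, e2, e3, e4⟩ := h1 a b h
    have ha1 : a.1 ≤ 3 := by omega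
    have ha2 : a.2 ≤ 1 := by omega
    refine ⟨⟨ha1, ha2, e3, e4⟩, ?_⟩
    have ha := idx_lt a ha1 ha2
    have hb := idx_lt b e3 e4
    rcases le_full _ ha _ hb (by simp only [idx]; omega) (by simp only [idx]; omega) with h' | h'
    · left
      rw [base_diag _ (by omega)]; omega
    · exact Or.inr ⟨h', (hrel ha2 e3 e4).2 h⟩
  · rintro ⟨⟨ha1, ha2, hb1, hb2⟩, h | h⟩
    · have ha := idx_lt a ha1 ha2
      have hb := idx_lt b hb1 hb2
      rw [base_diag _ (by omega)] at h
      have : idx a = idx b := by omega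
      rw [← pt_idx a ha2, this, pt_idx b hb2]
      exact h2 b hb1 hb2
    · exact (hrel ha2 hb1 hb2).1 h.2

/-- The relation of a mask. -/
def ofMask (m : ℕ) (a b : ℕ × ℕ) : Prop :=
  (a.1 ≤ 3 ∧ a.2 ≤ 1 ∧ b.1 ≤ 3 ∧ b.2 ≤ 1) ∧ m.testBit (8 * idx a + idx b) = true

theorem sols_testBit_full {m : ℕ} (hm : m ∈ sols) {q : ℕ} (h : m.testBit q = true) :
    full.testBit q = true := by
  rw [← sols_full m hm, Nat.testBit_and, Bool.and_eq_true] at h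
  exact h.2

theorem sols_testBit_base {m : ℕ} (hm : m ∈ sols) {q : ℕ} (h : base.testBit q = true) :
    m.testBit q = true := by
  rw [← sols_base m hm, Nat.testBit_and, Bool.and_eq_true] at h
  exact h.1

theorem sols_clause {m : ℕ} (hm : m ∈ sols) {u v w : ℕ} (h : ∃ x ∈ tab, (u, v, w) ∈ x.2)
    (hu : m.testBit u = true) (hv : m.testBit v = true) : m.testBit w = true := by
  obtain ⟨x, hx, hc⟩ := h
  have := sols_sat m hm x hx _ hc
  simpa [sat, hu, hv] using this

theorem ofMask_transfer {m : ℕ} (hm : m ∈ sols) : IsTransferSystemGrid 3 1 (ofMask m) := by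
  refine ⟨?_, ?_, ?_, ?_⟩
  · rintro a b ⟨⟨a1, a2, b1, b2⟩, h⟩
    have := full_le _ (idx_lt a a1 a2) _ (idx_lt b b1 b2) (sols_testBit_full hm h)
    simp only [idx] at this
    omega
  · intro a a1 a2
    refine ⟨⟨a1, a2, a1, a2⟩, sols_testBit_base hm ?_⟩
    have := idx_lt a a1 a2
    rw [base_diag _ (by omega)]
    omega
  · rintro a b c ⟨⟨a1, a2, b1, b2⟩, h⟩ ⟨⟨-, -, c1, c2⟩, h'⟩
    refine ⟨⟨a1, a2, c1, c2⟩, ?_⟩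
    rcases trans_complete _ (idx_lt a a1 a2) _ (idx_lt b b1 b2) (sols_testBit_full hm h)
      _ (idx_lt c c1 c2) (sols_testBit_full hm h') with e | e | e
    · rw [e]; exact h'
    · rw [← e]; exact h
    · exact sols_clause hm e h h'
  · rintro k h p ⟨⟨k1, k2, h1, h2⟩, hb⟩ p1 p2
    have p1' : p.1 ≤ 3 := by omega
    have p2' : p.2 ≤ 1 := by omega
    refine ⟨⟨by simp only; omega, by simp only; omega, p1', p2'⟩, ?_⟩
    have hmeet : idx (min k.1 p.1, min k.2 p.2) = meet (idx k) (idx p) := by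
      simp only [idx, meet]; omega
    rw [hmeet]
    have hp := idx_lt p p1' p2'
    rcases res_complete _ (idx_lt k k1 k2) _ (idx_lt h h1 h2) (sols_testBit_full hm hb)
      _ hp ⟨by simp only [idx]; omega, by simp only [idx]; omega⟩ with e | ⟨e, e'⟩ | e
    · rw [e]
      apply sols_testBit_base hm
      rw [base_diag _ (by omega)]
      omega
    · rw [e, e']; exact hb
    · exact sols_clause hm e hb hb

theorem code_ofMask {m : ℕ} (hm : m ∈ sols) : code (rel (ofMask m)) tab = m := by
  apply Nat.eq_of_testBit_eq
  intro q
  rw [Bool.eq_iff_iff, testBit_code]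
  have hrel : q < 64 → (rel (ofMask m) q ↔ m.testBit q = true) := by
    intro hq
    unfold rel ofMask
    rw [idx_pt, idx_pt, show 8 * (q / 8) + q % 8 = q by omega]
    have h1 := pt_le (q / 8) (by omega)
    have h2 := pt_le (q % 8) (by omega)
    tauto
  constructor
  · rintro (h | ⟨h, h'⟩)
    · exact sols_testBit_base hm h
    · exact (hrel (keys_lt q h)).1 h'
  · intro h
    have hf := sols_testBit_full hm h
    have hq := full_lt q hf
    rcases full_mem q hq hf with h' | h'
    · exact Or.inl h'
    · exact Or.inr ⟨h', (hrel hq).2 h⟩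

end GridTS

theorem num_transfer_systems_grid_4x2 :
    Nat.card {R : ℕ × ℕ → ℕ × ℕ → Prop // IsTransferSystemGrid 3 1 R} = 544 := by
  let f : {R : ℕ × ℕ → ℕ × ℕ → Prop // IsTransferSystemGrid 3 1 R} →
      {m // m ∈ GridTS.sols.toFinset} := fun R =>
    ⟨GridTS.code (GridTS.rel R.1) GridTS.tab, List.mem_toFinset.2
      (GridTS.code_mem _ _ GridTS.wf_tab (GridTS.rel_clauses R.1 R.2))⟩
  have hf : Function.Bijective f := by
    constructor
    · rintro ⟨R, hR⟩ ⟨S, hS⟩ h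
      have h' : GridTS.code (GridTS.rel R) GridTS.tab = GridTS.code (GridTS.rel S) GridTS.tab :=
        congrArg Subtype.val h
      apply Subtype.ext
      funext a b
      apply propext
      change R a b ↔ S a b
      rw [GridTS.testBit_rel R hR, GridTS.testBit_rel S hS, h']
    · rintro ⟨m, hm⟩
      have hm' := List.mem_toFinset.1 hm
      exact ⟨⟨GridTS.ofMask m, GridTS.ofMask_transfer hm'⟩,
        Subtype.ext (GridTS.code_ofMask hm')⟩
  rw [Nat.card_eq_of_bijective f hf, Nat.card_eq_fintype_card, Fintype.card_coe,
    List.toFinset_card_of_nodup GridTS.sols_nodup, GridTS.sols_length]
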